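/- Let B ≥ 1, α > 0, 0 < q < ∞, and let f : (0,∞) → [0,∞) be a measurable function of class GM(B). Then there exists a constant C = C(α,q,B) such that (∫_0^∞ (x^{−α} ∫_0^x f(t) dt/t)^q dx/x)^{1/q} ≤ C·(∫_0^∞ (x^{−α} f(x))^q dx/x)^{1/q}. -/

import Mathlib

open MeasureTheory Real Set
open scoped ENNReal

/-- `f ∈ GM(B)` (real-valued): `f` is of bounded variation on every compact subinterval of
`(0,∞)` and `V_f([x,2x]) ≤ B |f(x)|` for every `x > 0`. -/
def GMr (B : ℝ) (f : ℝ → ℝ) : Prop :=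
  (∀ a b : ℝ, 0 < a → a ≤ b → BoundedVariationOn f (Set.Icc a b)) ∧
  ∀ x : ℝ, 0 < x → eVariationOn f (Set.Icc x (2 * x)) ≤ ENNReal.ofReal (B * |f x|)

lemma gm_le {B : ℝ} {f : ℝ → ℝ} (hB : 1 ≤ B) (hf : ∀ x : ℝ, 0 < x → 0 ≤ f x) (h : GMr B f)
    {y t : ℝ} (hy : 0 < y) (h1 : y ≤ t) (h2 : t ≤ 2 * y) : f t ≤ (1 + B) * f y := by
  have e := (eVariationOn.edist_le f (s := Set.Icc y (2 * y)) (x := t) (y := y)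
    ⟨h1, h2⟩ ⟨le_rfl, by linarith⟩).trans (h.2 y hy)
  have hp : 0 ≤ B * |f y| := by positivity
  rw [edist_le_ofReal hp, Real.dist_eq, abs_of_nonneg (hf y hy)] at e
  have := le_abs_self (f t - f y)
  linarith

lemma tsum_rpow_le {q : ℝ} (hq : 0 < q) (s : ℝ≥0∞) (u : ℕ → ℝ≥0∞) :
    (∑' k, s ^ k * (s ^ k * u k)) ^ q ≤ (∑' k, s ^ k) ^ q * ∑' k, (s ^ k * u k) ^ q := by
  set T := ∑' k, (s ^ k * u k) ^ q with hT
  have h1 : ∀ k, s ^ k * u k ≤ T ^ (1 / q) := fun k => by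
    have : (s ^ k * u k) ^ q ≤ T := ENNReal.le_tsum k
    rw [one_div, ENNReal.le_rpow_inv_iff hq]
    exact this
  calc (∑' k, s ^ k * (s ^ k * u k)) ^ q ≤ (∑' k, s ^ k * T ^ (1 / q)) ^ q := by
        apply ENNReal.rpow_le_rpow _ hq.le
        exact ENNReal.tsum_le_tsum fun k => by gcongr; exact h1 k
    _ = _ := by
        rw [ENNReal.tsum_mul_right, ENNReal.mul_rpow_of_nonneg _ _ hq.le, ← ENNReal.rpow_mul,
          one_div_mul_cancel hq.ne', ENNReal.rpow_one]

lemma scale_int (F : ℝ → ℝ≥0∞) {c : ℝ} (hc : 0 < c) :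
    ∫⁻ x in Set.Ioi (0 : ℝ), F (x / c) / ENNReal.ofReal x
      = ∫⁻ x in Set.Ioi (0 : ℝ), F x / ENNReal.ofReal x := by
  have him : (fun x : ℝ => x / c) '' Set.Ioi 0 = Set.Ioi 0 := by
    ext y
    simp only [Set.mem_image, Set.mem_Ioi]
    constructor
    · rintro ⟨x, hx, rfl⟩; positivity
    · intro hy; exact ⟨y * c, by positivity, by field_simp⟩
  have := lintegral_image_eq_lintegral_abs_deriv_mul (s := Set.Ioi (0 : ℝ))
    (f := fun x : ℝ => x / c) (f' := fun _ => 1 / c) measurableSet_Ioi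
    (fun x _ => ((hasDerivAt_id x).div_const c).hasDerivWithinAt)
    (fun x _ y _ h => by field_simp at h; exact h) (fun x => F x / ENNReal.ofReal x)
  rw [him] at this
  rw [this]
  apply setLIntegral_congr_fun measurableSet_Ioi
  intro x hx
  have hx : 0 < x := hx
  dsimp only
  rw [abs_of_pos (by positivity), ENNReal.ofReal_div_of_pos hc, ENNReal.ofReal_div_of_pos hc]
  have h0 : ENNReal.ofReal c ≠ 0 := by simpa using hc
  have h0' : ENNReal.ofReal x ≠ 0 := by simpa using hx
  rw [ENNReal.ofReal_one, one_div, ENNReal.div_eq_inv_mul (a := F (x / c)),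
    ENNReal.div_eq_inv_mul (a := F (x / c)),
    ENNReal.inv_div (Or.inl ENNReal.ofReal_ne_top) (Or.inl h0), div_eq_mul_inv _ (ENNReal.ofReal x),
    mul_comm _ (F (x / c))]
  calc F (x / c) * (ENNReal.ofReal x)⁻¹
      = ((ENNReal.ofReal c)⁻¹ * ENNReal.ofReal c) * (F (x / c) * (ENNReal.ofReal x)⁻¹) := by
        rw [ENNReal.inv_mul_cancel h0 ENNReal.ofReal_ne_top, one_mul]
    _ = _ := by ring

lemma piece {B α : ℝ} {f : ℝ → ℝ} (hB : 1 ≤ B) (hα : 0 < α)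
    (hf : ∀ x : ℝ, 0 < x → 0 ≤ f x) (h : GMr B f) {x : ℝ} (hx : 0 < x) (k : ℕ) :
    ENNReal.ofReal (x ^ (-α)) *
      ∫⁻ t in Set.Ioc (x / 2 ^ (k + 1)) (x / 2 ^ k), ENNReal.ofReal (f t / t) ≤
    ENNReal.ofReal (1 + B) * (ENNReal.ofReal (2 ^ (-α / 2)) ^ k *
      (ENNReal.ofReal (2 ^ (-α / 2)) ^ k *
        ENNReal.ofReal ((x / 2 ^ (k + 1)) ^ (-α) * f (x / 2 ^ (k + 1))))) := by
  obtain ⟨y, hy⟩ : ∃ y, y = x / 2 ^ (k + 1) := ⟨_, rfl⟩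
  have hy0 : 0 < y := by rw [hy]; positivity
  have hxk : x / 2 ^ k = 2 * y := by rw [hy, pow_succ]; field_simp
  have hxy : x = 2 ^ (k + 1) * y := by rw [hy]; field_simp
  have hfy := hf y hy0
  rw [← hy, hxk]
  have hI : ∫⁻ t in Set.Ioc y (2 * y), ENNReal.ofReal (f t / t) ≤
      ENNReal.ofReal ((1 + B) * f y) := by
    calc _ ≤ ∫⁻ t in Set.Ioc y (2 * y), ENNReal.ofReal ((1 + B) * f y / y) := by
          apply setLIntegral_mono' measurableSet_Ioc
          intro t ht
          apply ENNReal.ofReal_le_ofReal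
          have := gm_le hB hf h hy0 ht.1.le ht.2
          apply div_le_div₀ (by positivity) this hy0 ht.1.le
      _ = _ := by
          rw [setLIntegral_const, Real.volume_Ioc, ← ENNReal.ofReal_mul (by positivity)]
          congr 1
          field_simp
          ring
  have hs : (0 : ℝ) ≤ 2 ^ (-α / 2) := by positivity
  have hs1 : (2 : ℝ) ^ (-α) ≤ 1 := Real.rpow_le_one_of_one_le_of_nonpos (by norm_num) (by linarith)
  have hss : (2 : ℝ) ^ (-α) = 2 ^ (-α / 2) * 2 ^ (-α / 2) := by
    rw [← Real.rpow_add (by norm_num)]; congr 1; ring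
  have hxa : x ^ (-α) ≤ (2 ^ (-α / 2)) ^ k * ((2 ^ (-α / 2)) ^ k * y ^ (-α)) := by
    rw [hxy, Real.mul_rpow (by positivity) hy0.le, ← mul_assoc, ← mul_pow, ← hss,
      ← Real.rpow_natCast, ← Real.rpow_mul (by norm_num), mul_comm _ (-α),
      Real.rpow_mul (by norm_num), Real.rpow_natCast, pow_succ]
    have : 0 ≤ ((2 : ℝ) ^ (-α)) ^ k := by positivity
    have hya : 0 ≤ y ^ (-α) := by positivity
    apply mul_le_mul_of_nonneg_right _ hya
    exact mul_le_of_le_one_right this hs1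
  calc _ ≤ ENNReal.ofReal (x ^ (-α)) * ENNReal.ofReal ((1 + B) * f y) := by gcongr
    _ = ENNReal.ofReal (x ^ (-α) * ((1 + B) * f y)) := by
        rw [← ENNReal.ofReal_mul (by positivity)]
    _ ≤ ENNReal.ofReal ((1 + B) * ((2 ^ (-α / 2)) ^ k * ((2 ^ (-α / 2)) ^ k *
          (y ^ (-α) * f y)))) := by
        apply ENNReal.ofReal_le_ofReal
        have : 0 ≤ (1 + B) * f y := by positivity
        have := mul_le_mul_of_nonneg_right hxa this
        linarith
    _ = _ := by
        rw [ENNReal.ofReal_mul (by positivity), ENNReal.ofReal_mul (by positivity),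
          ENNReal.ofReal_mul (by positivity), ENNReal.ofReal_pow hs]

lemma pointwise {B α : ℝ} {f : ℝ → ℝ} (hB : 1 ≤ B) (hα : 0 < α)
    (hf : ∀ x : ℝ, 0 < x → 0 ≤ f x) (h : GMr B f) {x : ℝ} (hx : 0 < x) :
    ENNReal.ofReal (x ^ (-α)) * ∫⁻ t in Set.Ioc 0 x, ENNReal.ofReal (f t / t) ≤
    ENNReal.ofReal (1 + B) * ∑' k : ℕ, (ENNReal.ofReal (2 ^ (-α / 2)) ^ k *
      (ENNReal.ofReal (2 ^ (-α / 2)) ^ k *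
        ENNReal.ofReal ((x / 2 ^ (k + 1)) ^ (-α) * f (x / 2 ^ (k + 1))))) := by
  have hsub : Set.Ioc 0 x ⊆ ⋃ k : ℕ, Set.Ioc (x / 2 ^ (k + 1)) (x / 2 ^ k) := by
    intro t ht
    have ht0 : 0 < t := ht.1
    obtain ⟨k, h1, h2⟩ := exists_nat_pow_near (x := x / t) (y := (2 : ℝ))
      ((one_le_div ht0).2 ht.2) (by norm_num)
    rw [Set.mem_iUnion]
    refine ⟨k, ?_, ?_⟩
    · rw [div_lt_iff₀ (by positivity)]
      rw [div_lt_iff₀ ht0] at h2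
      linarith
    · rw [le_div_iff₀ (by positivity)]
      rw [le_div_iff₀ ht0] at h1
      linarith
  calc _ ≤ ENNReal.ofReal (x ^ (-α)) * ∑' k : ℕ, ∫⁻ t in Set.Ioc (x / 2 ^ (k + 1)) (x / 2 ^ k),
        ENNReal.ofReal (f t / t) := by
        gcongr
        exact (lintegral_mono_set hsub).trans (lintegral_iUnion_le _ _)
    _ ≤ _ := by
        rw [← ENNReal.tsum_mul_left, ← ENNReal.tsum_mul_left]
        exact ENNReal.tsum_le_tsum fun k => piece hB hα hf h hx k

/-- Hardy's inequality for general monotone functions: for `α > 0`, `0 < q < ∞`, `B ≥ 1`,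
there is `C = C(α,q,B)` such that every measurable nonnegative general monotone `f` of class
`GM(B)` satisfies
`(∫_0^∞ (x^{-α} ∫_0^x f(t) dt/t)^q dx/x)^{1/q} ≤ C (∫_0^∞ (x^{-α} f(x))^q dx/x)^{1/q}`. -/
theorem stmt19 (B α q : ℝ) (hB : 1 ≤ B) (hα : 0 < α) (hq : 0 < q) :
    ∃ C : ℝ, 0 < C ∧
      ∀ f : ℝ → ℝ, Measurable f → (∀ x : ℝ, 0 < x → 0 ≤ f x) → GMr B f →
        (∫⁻ x in Set.Ioi (0 : ℝ),
            (ENNReal.ofReal (x ^ (-α)) *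
              ∫⁻ t in Set.Ioc (0 : ℝ) x, ENNReal.ofReal (f t / t)) ^ q /
              ENNReal.ofReal x) ^ (1 / q) ≤
          ENNReal.ofReal C *
            (∫⁻ x in Set.Ioi (0 : ℝ),
              ENNReal.ofReal (x ^ (-α) * f x) ^ q / ENNReal.ofReal x) ^ (1 / q) := by
  obtain ⟨s, hs⟩ : ∃ s, s = ENNReal.ofReal (2 ^ (-α / 2)) := ⟨_, rfl⟩
  have hs1 : s < 1 := by
    rw [hs, ENNReal.ofReal_lt_one]
    exact Real.rpow_lt_one_of_one_lt_of_neg (by norm_num) (by linarith)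
  have hsq1 : s ^ q < 1 := ENNReal.rpow_lt_one hs1 hq
  obtain ⟨K, hK⟩ : ∃ K, K = ENNReal.ofReal (1 + B) ^ q * (∑' k : ℕ, s ^ k) ^ q *
    ∑' k : ℕ, (s ^ q) ^ k := ⟨_, rfl⟩
  have hKtop : K ≠ ∞ := by
    rw [hK, ENNReal.tsum_geometric, ENNReal.tsum_geometric]
    refine ENNReal.mul_ne_top (ENNReal.mul_ne_top ?_ ?_) ?_
    · exact ENNReal.rpow_ne_top_of_nonneg hq.le ENNReal.ofReal_ne_top
    · exact ENNReal.rpow_ne_top_of_nonneg hq.le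
        (ENNReal.inv_ne_top.2 (tsub_pos_of_lt hs1).ne')
    · exact ENNReal.inv_ne_top.2 (tsub_pos_of_lt hsq1).ne'
  have hKtop' : K ^ (1 / q) ≠ ∞ := ENNReal.rpow_ne_top_of_nonneg (by positivity) hKtop
  refine ⟨(K ^ (1 / q)).toReal + 1, by positivity, ?_⟩
  intro f hfm hf h
  have key : (∫⁻ x in Set.Ioi (0 : ℝ),
            (ENNReal.ofReal (x ^ (-α)) *
              ∫⁻ t in Set.Ioc (0 : ℝ) x, ENNReal.ofReal (f t / t)) ^ q /
              ENNReal.ofReal x) ≤ K * ∫⁻ x in Set.Ioi (0 : ℝ),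
              ENNReal.ofReal (x ^ (-α) * f x) ^ q / ENNReal.ofReal x := by
    obtain ⟨F, hF⟩ : ∃ F : ℝ → ℝ≥0∞, F = fun x => ENNReal.ofReal (x ^ (-α) * f x) ^ q := ⟨_, rfl⟩
    have hFm : Measurable F := by rw [hF]; fun_prop
    calc _ ≤ ∫⁻ x in Set.Ioi (0 : ℝ), ENNReal.ofReal (1 + B) ^ q * (∑' k : ℕ, s ^ k) ^ q *
            ∑' k : ℕ, (s ^ q) ^ k * (F (x / 2 ^ (k + 1)) / ENNReal.ofReal x) := by
          apply setLIntegral_mono' measurableSet_Ioi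
          intro x hx
          have hp := pointwise hB hα hf h hx
          rw [← hs] at hp
          have hp2 := ENNReal.rpow_le_rpow hp hq.le
          rw [ENNReal.mul_rpow_of_nonneg (ENNReal.ofReal (1 + B)) _ hq.le] at hp2
          have hp3 := hp2.trans (mul_le_mul_right (tsum_rpow_le hq s _) _)
          have hp4 := ENNReal.div_le_div_right hp3 (ENNReal.ofReal x)
          refine hp4.trans (le_of_eq ?_)
          rw [← mul_assoc, mul_div_assoc, div_eq_mul_inv, ← ENNReal.tsum_mul_right]
          congr 1
          apply tsum_congr
          intro k
          rw [ENNReal.mul_rpow_of_nonneg _ _ hq.le, hF, div_eq_mul_inv, mul_assoc]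
          congr 1
          rw [← ENNReal.rpow_natCast, ← ENNReal.rpow_natCast, ← ENNReal.rpow_mul,
            ← ENNReal.rpow_mul, mul_comm]
      _ = _ := by
          rw [lintegral_const_mul _ (by fun_prop), lintegral_tsum (fun k => by fun_prop), hK,
            mul_assoc _ (∑' k : ℕ, (s ^ q) ^ k), ← ENNReal.tsum_mul_right]
          congr 1
          apply tsum_congr
          intro k
          rw [lintegral_const_mul _ (by fun_prop), scale_int F (by positivity), hF]
  calc _ ≤ (K * ∫⁻ x in Set.Ioi (0 : ℝ),
              ENNReal.ofReal (x ^ (-α) * f x) ^ q / ENNReal.ofReal x) ^ (1 / q) :=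
        ENNReal.rpow_le_rpow key (by positivity)
    _ ≤ _ := by
        rw [ENNReal.mul_rpow_of_nonneg _ _ (by positivity)]
        gcongr
        rw [ENNReal.le_ofReal_iff_toReal_le hKtop' (by positivity)]
        linarith
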